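/- arXiv:2401.10108 — 3 statements merged into one kernel-verified Lean document; each statement's English description precedes it below -/
import Mathlib

section
/- Let ε, ε̇, α, α̇, η ∈ V be given, and suppose σᵉ, σᵛ, A ∈ V satisfy the three pointwise local stationarity equations: (a) Cσ*(σᵉ) + Cm*(A) − ε − η = 0; (b) T·Dσ*(σᵛ) − T·Dm*(A) − T·ε̇ − η = 0; (c) (Cm*)ᵀ(σᵉ) − T·(Dm*)ᵀ(σᵛ) + (C_A* + T·D_A*)(A) + α − T·α̇ = 0. Then, with β := (Dα + T·Cα)⁻¹( Dα(α̇) + Dm(ε̇) + Cα(α) + Cm(ε) + Ĉ(η) ) (note Dα + T·Cα is positive definite, hence invertible), one has σᵉ = Cε(ε) + Cm(α) + (Cε − Cm∘Dα⁻¹∘Dm)(η) − T·Cm(β), σᵛ = Dm(α̇) + Dε(ε̇) + T⁻¹·D_I(η) − Dm(β), and A = Dα(α̇) + Dm(ε̇) − Dα(β). -/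
open scoped RealInnerProductSpace

section Defs

variable {V : Type*} [NormedAddCommGroup V] [InnerProductSpace ℝ V]

/-- Schur complement `A^S := A − B ∘ C⁻¹ ∘ B`. -/
noncomputable def schur (A B C : V →L[ℝ] V) : V →L[ℝ] V :=
  A - B ∘L Ring.inverse C ∘L B

/-- `Ĉ := Cm − Cα ∘ Dα⁻¹ ∘ Dm`. -/
noncomputable def Chat (Cα Cm Dα Dm : V →L[ℝ] V) : V →L[ℝ] V :=
  Cm - Cα ∘L Ring.inverse Dα ∘L Dm

/-- The instantaneous viscosity tensor `D_I := Dε − Dm∘Dα⁻¹∘Dm`. -/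
noncomputable def DInst (Dε Dα Dm : V →L[ℝ] V) : V →L[ℝ] V :=
  Dε - Dm ∘L Ring.inverse Dα ∘L Dm

/-- Conjugate coefficient `Cσ* := (Cε^S)⁻¹` (also used for `Dσ*`). -/
noncomputable def sigStar (Cε Cα Cm : V →L[ℝ] V) : V →L[ℝ] V :=
  Ring.inverse (schur Cε Cm Cα)

/-- Conjugate coefficient `C_A* := (Cα^S)⁻¹` (also used for `D_A*`). -/
noncomputable def AStar (Cε Cα Cm : V →L[ℝ] V) : V →L[ℝ] V :=
  Ring.inverse (schur Cα Cm Cε)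

/-- Conjugate coefficient `Cm* := (Cε^S)⁻¹ ∘ Cm ∘ Cα⁻¹` (also used for `Dm*`). -/
noncomputable def mStar (Cε Cα Cm : V →L[ℝ] V) : V →L[ℝ] V :=
  Ring.inverse (schur Cε Cm Cα) ∘L Cm ∘L Ring.inverse Cα

end Defs

section Helpers

variable {V : Type*} [NormedAddCommGroup V] [InnerProductSpace ℝ V]

theorem isUnit_of_forall_inner_pos [FiniteDimensional ℝ V] {P : V →L[ℝ] V}
    (hP : ∀ x : V, x ≠ 0 → 0 < ⟪P x, x⟫) : IsUnit P := by
  have hinj : Function.Injective P := by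
    refine (injective_iff_map_eq_zero P).2 fun x hx => ?_
    by_contra hne
    simpa [hx] using hP x hne
  rw [ContinuousLinearMap.isUnit_iff_bijective]
  exact ⟨hinj, (LinearMap.injective_iff_surjective (f := (P : V →ₗ[ℝ] V))).1 hinj⟩

theorem ringInverse_apply_apply {P : V →L[ℝ] V} (hP : IsUnit P) (x : V) :
    Ring.inverse P (P x) = x :=
  congrArg (fun Q : V →L[ℝ] V => Q x) (Ring.inverse_mul_cancel P hP)

theorem apply_ringInverse_apply {P : V →L[ℝ] V} (hP : IsUnit P) (x : V) :
    P (Ring.inverse P x) = x :=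
  congrArg (fun Q : V →L[ℝ] V => Q x) (Ring.mul_inverse_cancel P hP)

theorem IsSelfAdjoint.ringInverse_clm [FiniteDimensional ℝ V] {P : V →L[ℝ] V}
    (hP : IsSelfAdjoint P) : IsSelfAdjoint (Ring.inverse P) := by
  rw [IsSelfAdjoint, ← Ring.inverse_star, hP.star_eq]

theorem isSelfAdjoint_schur [FiniteDimensional ℝ V] {P B Q : V →L[ℝ] V}
    (hP : IsSelfAdjoint P) (hB : IsSelfAdjoint B) (hQ : IsSelfAdjoint Q) :
    IsSelfAdjoint (schur P B Q) := by
  have h := hQ.ringInverse_clm.conjugate B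
  rw [hB.star_eq, mul_assoc] at h
  exact hP.sub h

theorem adjoint_mStar [FiniteDimensional ℝ V] {P Q B : V →L[ℝ] V}
    (hP : IsSelfAdjoint P) (hQ : IsSelfAdjoint Q) (hB : IsSelfAdjoint B) :
    ContinuousLinearMap.adjoint (mStar P Q B) =
      Ring.inverse Q ∘L B ∘L Ring.inverse (schur P B Q) := by
  have h : star (Ring.inverse (schur P B Q) * (B * Ring.inverse Q)) =
      Ring.inverse Q * (B * Ring.inverse (schur P B Q)) := by
    rw [star_mul, star_mul, hB.star_eq, hQ.ringInverse_clm.star_eq,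
      (isSelfAdjoint_schur hP hB hQ).ringInverse_clm.star_eq, mul_assoc]
  exact h

theorem schur_neg (P B Q : V →L[ℝ] V) : schur P (-B) Q = schur P B Q := by
  ext x; simp [schur]

theorem mStar_neg (P Q B : V →L[ℝ] V) : mStar P Q (-B) = -mStar P Q B := by
  ext x; simp [mStar, schur_neg]

/-- The Woodbury identity for the inverses of the two Schur complements. -/
theorem ringInverse_schur_apply {P Q B : V →L[ℝ] V}
    (hP : IsUnit P) (hQ : IsUnit Q) (hS : IsUnit (schur P B Q)) (hR : IsUnit (schur Q B P))
    (x : V) :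
    Ring.inverse (schur Q B P) x = Ring.inverse Q x +
      Ring.inverse Q (B (Ring.inverse (schur P B Q) (B (Ring.inverse Q x)))) := by
  set w := Ring.inverse (schur P B Q) (B (Ring.inverse Q x)) with hw
  set y := Ring.inverse Q x + Ring.inverse Q (B w) with hy
  have hSw : P w - B (Ring.inverse Q (B w)) = B (Ring.inverse Q x) :=
    apply_ringInverse_apply hS _
  have hBy : B y = P w := by
    rw [hy, map_add, ← hSw]; abel
  have hQy : Q y = x + B w := by
    rw [hy, map_add, apply_ringInverse_apply hQ, apply_ringInverse_apply hQ]
  have hSy : schur Q B P y = x := by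
    change Q y - B (Ring.inverse P (B y)) = x
    rw [hBy, ringInverse_apply_apply hP, hQy]; abel
  rw [← hSy, ringInverse_apply_apply hR]

/-- The conjugate coefficients invert the block operator with diagonal `P`, `Q` and
off-diagonal `-B`. -/
theorem block_inverse_star [FiniteDimensional ℝ V] {P Q B : V →L[ℝ] V}
    (hP : IsSelfAdjoint P) (hQ : IsSelfAdjoint Q) (hB : IsSelfAdjoint B)
    (uP : IsUnit P) (uQ : IsUnit Q) (uS : IsUnit (schur P B Q)) (uR : IsUnit (schur Q B P))
    {s A e a : V} (he : sigStar P Q B s + mStar P Q B A = e)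
    (ha : ContinuousLinearMap.adjoint (mStar P Q B) s + AStar P Q B A = a) :
    s = P e - B a ∧ A = Q a - B e := by
  have he' : Ring.inverse (schur P B Q) s +
      Ring.inverse (schur P B Q) (B (Ring.inverse Q A)) = e := he
  have ha' : a = Ring.inverse Q A + Ring.inverse Q (B e) := by
    rw [← ha, adjoint_mStar hP hQ hB, AStar, ringInverse_schur_apply uP uQ uS uR, ← he']
    simp only [ContinuousLinearMap.comp_apply, map_add]
    abel
  have hSe : P e - B (Ring.inverse Q (B e)) = s + B (Ring.inverse Q A) := by
    change schur P B Q e = _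
    rw [← he', map_add, apply_ringInverse_apply uS, apply_ringInverse_apply uS]
  constructor
  · rw [ha', map_add, eq_sub_of_add_eq hSe.symm]; abel
  · rw [ha', map_add, apply_ringInverse_apply uQ, apply_ringInverse_apply uQ]; abel

end Helpers

theorem stmt11 {V : Type*} [NormedAddCommGroup V] [InnerProductSpace ℝ V]
    [FiniteDimensional ℝ V]
    (Cε Cα Cm Dε Dα Dm : V →L[ℝ] V)
    (hCε : IsSelfAdjoint Cε) (hCα : IsSelfAdjoint Cα) (hCm : IsSelfAdjoint Cm)
    (hDε : IsSelfAdjoint Dε) (hDα : IsSelfAdjoint Dα) (hDm : IsSelfAdjoint Dm)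
    (hCεpos : ∀ x : V, x ≠ 0 → 0 < ⟪Cε x, x⟫)
    (hCαpos : ∀ x : V, x ≠ 0 → 0 < ⟪Cα x, x⟫)
    (hDεpos : ∀ x : V, x ≠ 0 → 0 < ⟪Dε x, x⟫)
    (hDαpos : ∀ x : V, x ≠ 0 → 0 < ⟪Dα x, x⟫)
    (hCεSpos : ∀ x : V, x ≠ 0 → 0 < ⟪schur Cε Cm Cα x, x⟫)
    (hCαSpos : ∀ x : V, x ≠ 0 → 0 < ⟪schur Cα Cm Cε x, x⟫)
    (hDεSpos : ∀ x : V, x ≠ 0 → 0 < ⟪schur Dε Dm Dα x, x⟫)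
    (hDαSpos : ∀ x : V, x ≠ 0 → 0 < ⟪schur Dα Dm Dε x, x⟫)
    (T : ℝ) (hT : 0 < T)
    (ε εdot α αdot η σe σv A : V)
    (ha : sigStar Cε Cα Cm σe + mStar Cε Cα Cm A - ε - η = 0)
    (hb : T • sigStar Dε Dα Dm σv - T • mStar Dε Dα Dm A - T • εdot - η = 0)
    (hc : ContinuousLinearMap.adjoint (mStar Cε Cα Cm) σe -
        T • ContinuousLinearMap.adjoint (mStar Dε Dα Dm) σv +
        (AStar Cε Cα Cm + T • AStar Dε Dα Dm) A + α - T • αdot = 0) :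
    σe = Cε ε + Cm α + (Cε - Cm ∘L Ring.inverse Dα ∘L Dm) η -
        T • Cm (Ring.inverse (Dα + T • Cα)
          (Dα αdot + Dm εdot + Cα α + Cm ε + Chat Cα Cm Dα Dm η)) ∧
      σv = Dm αdot + Dε εdot + T⁻¹ • DInst Dε Dα Dm η -
        Dm (Ring.inverse (Dα + T • Cα)
          (Dα αdot + Dm εdot + Cα α + Cm ε + Chat Cα Cm Dα Dm η)) ∧
      A = Dα αdot + Dm εdot -
        Dα (Ring.inverse (Dα + T • Cα)
          (Dα αdot + Dm εdot + Cα α + Cm ε + Chat Cα Cm Dα Dm η)) := by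
  have uDα := isUnit_of_forall_inner_pos hDαpos
  have uM : IsUnit (Dα + T • Cα) := by
    refine isUnit_of_forall_inner_pos fun x hx => ?_
    have h₁ := hDαpos x hx
    have h₂ := mul_pos hT (hCαpos x hx)
    simpa [inner_add_left, real_inner_smul_left] using add_pos h₁ h₂
  obtain ⟨a, ha'⟩ : ∃ a, ContinuousLinearMap.adjoint (mStar Cε Cα Cm) σe +
      AStar Cε Cα Cm A = a := ⟨_, rfl⟩
  obtain ⟨d, hd⟩ : ∃ d, ContinuousLinearMap.adjoint (mStar Dε Dα (-Dm)) σv +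
      AStar Dε Dα (-Dm) A = d := ⟨_, rfl⟩
  have he : sigStar Cε Cα Cm σe + mStar Cε Cα Cm A = ε + η := by
    rw [← sub_eq_zero, ← ha]; abel
  have hf : sigStar Dε Dα (-Dm) σv + mStar Dε Dα (-Dm) A = εdot + T⁻¹ • η := by
    have hη : η = T • (sigStar Dε Dα Dm σv - mStar Dε Dα Dm A - εdot) := by
      rw [← sub_eq_zero, ← neg_eq_zero, ← hb]; module
    rw [mStar_neg, sigStar, schur_neg, ← sigStar, hη, inv_smul_smul₀ hT.ne']
    simp only [neg_apply]
    abel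
  obtain ⟨hσe, hAC⟩ := block_inverse_star hCε hCα hCm (isUnit_of_forall_inner_pos hCεpos)
    (isUnit_of_forall_inner_pos hCαpos) (isUnit_of_forall_inner_pos hCεSpos)
    (isUnit_of_forall_inner_pos hCαSpos) he ha'
  obtain ⟨hσv, hAD⟩ := block_inverse_star hDε hDα hDm.neg (isUnit_of_forall_inner_pos hDεpos)
    uDα (by rw [schur_neg]; exact isUnit_of_forall_inner_pos hDεSpos)
    (by rw [schur_neg]; exact isUnit_of_forall_inner_pos hDαSpos) hf hd
  have hc' : a = T • αdot - T • d - α := by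
    rw [← sub_eq_zero, ← hc, ← ha', ← hd, mStar_neg, AStar, AStar, AStar, schur_neg, map_neg]
    simp only [neg_apply, add_apply,
      smul_apply]
    module
  obtain ⟨p, hp⟩ : ∃ p, Ring.inverse Dα (Dm η) = p := ⟨_, rfl⟩
  have hDp : Dα p = Dm η := by rw [← hp, apply_ringInverse_apply uDα]
  have hβ : Ring.inverse (Dα + T • Cα)
      (Dα αdot + Dm εdot + Cα α + Cm ε + Chat Cα Cm Dα Dm η) = αdot - d - T⁻¹ • p := by
    have hMβ : Dα αdot + Dm εdot + Cα α + Cm ε + Chat Cα Cm Dα Dm η =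
        (Dα + T • Cα) (αdot - d - T⁻¹ • p) := by
      have hAA := hAC.symm.trans hAD
      rw [hc'] at hAA
      simp only [Chat, neg_apply, add_apply,
        sub_apply, ContinuousLinearMap.comp_apply,
        smul_apply, map_add, map_sub, map_smul, hp, hDp,
        smul_add, inv_smul_smul₀ hT.ne'] at hAA ⊢
      linear_combination (norm := module) -hAA
    rw [hMβ, ringInverse_apply_apply uM]
  rw [hβ]
  refine ⟨?_, ?_, ?_⟩
  · rw [hσe, hc']
    simp only [sub_apply, ContinuousLinearMap.comp_apply, map_add, map_sub,
      map_smul, hp, smul_sub, smul_inv_smul₀ hT.ne']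
    abel
  · rw [hσv]
    simp only [DInst, sub_apply, neg_apply,
      ContinuousLinearMap.comp_apply, map_add, map_sub, map_smul, hp, smul_sub]
    abel
  · rw [hAD]
    simp only [neg_apply, map_add, map_sub, map_smul, hDp]
    module
end

section
/- Let η : [0,T] → V be continuous; let β : [0,T] → V be continuously differentiable with Dα(β̇(t)) − Cα(β(t)) + T⁻¹ Ĉ(η(t)) = 0 for all t ∈ [0,T] and β(T) = 0; and let a : [0,T] → V be continuously differentiable with Dα(ȧ(t)) + Cα(a(t)) = Dα(β(t) + T·β̇(t)) for all t ∈ [0,T] and a(0) = 0. Define S(t) := (C_I + T⁻¹·D_I)(η(t)) + Ĉᵀ(a(t) − T·β(t)). Then ∫₀ᵀ ⟨S(t), η(t)⟩ dt = ∫₀ᵀ { ⟨η(t), (Cε^S + T⁻¹·D_I)(η(t))⟩ + T·⟨β(t), Dα(β(t))⟩ + T²·⟨β̇(t), (Dα∘Cα⁻¹∘Dα)(β̇(t))⟩ } dt. In particular, if Cε^S and D_I are positive semidefinite, then ∫₀ᵀ ⟨S(t), η(t)⟩ dt ≥ 0. -/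
open scoped RealInnerProductSpace

section Defs

variable {V : Type*} [NormedAddCommGroup V] [InnerProductSpace ℝ V] [FiniteDimensional ℝ V]

/-- The Schur complement `Cε^S := Cε − Cm ∘ Cα⁻¹ ∘ Cm`. -/
noncomputable def CSchur (Cε Cα Cm : V →L[ℝ] V) : V →L[ℝ] V :=
  Cε - Cm ∘L Ring.inverse Cα ∘L Cm

/-- The instantaneous elasticity tensor `C_I := Cε^S + Ĉᵀ∘Cα⁻¹∘Ĉ`. -/
noncomputable def CInst (Cε Cα Cm Dα Dm : V →L[ℝ] V) : V →L[ℝ] V :=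
  CSchur Cε Cα Cm +
    ContinuousLinearMap.adjoint (Chat Cα Cm Dα Dm) ∘L Ring.inverse Cα ∘L Chat Cα Cm Dα Dm

/-- The constitutive-gap stress
`S(t) := (C_I + T⁻¹·D_I)(η(t)) + Ĉᵀ(a(t) − T·β(t))`. -/
noncomputable def Sgap (Cε Cα Cm Dε Dα Dm : V →L[ℝ] V) (T : ℝ)
    (η β a : ℝ → V) (t : ℝ) : V :=
  (CInst Cε Cα Cm Dα Dm + T⁻¹ • DInst Dε Dα Dm) (η t) +
    ContinuousLinearMap.adjoint (Chat Cα Cm Dα Dm) (a t - T • β t)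

end Defs

section Helpers

variable {V : Type*} [NormedAddCommGroup V] [InnerProductSpace ℝ V]

theorem inner_apply_nonneg_of_inner_pos {A : V →L[ℝ] V} (hA : ∀ x : V, x ≠ 0 → 0 < ⟪A x, x⟫)
    (x : V) : 0 ≤ ⟪A x, x⟫ := by
  rcases eq_or_ne x 0 with rfl | hx
  · simp
  · exact (hA x hx).le

theorem inverse_apply_apply {A : V →L[ℝ] V} (hA : IsUnit A) (x : V) :
    Ring.inverse A (A x) = x :=
  DFunLike.congr_fun (Ring.inverse_mul_cancel A hA) x

theorem apply_inverse_apply {A : V →L[ℝ] V} (hA : IsUnit A) (x : V) :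
    A (Ring.inverse A x) = x :=
  DFunLike.congr_fun (Ring.mul_inverse_cancel A hA) x

variable [FiniteDimensional ℝ V]

theorem isUnit_of_inner_pos {A : V →L[ℝ] V} (hA : ∀ x : V, x ≠ 0 → 0 < ⟪A x, x⟫) :
    IsUnit A := by
  have : CompleteSpace V := FiniteDimensional.complete ℝ V
  have hinj : Function.Injective A := by
    rw [injective_iff_map_eq_zero]
    intro x hx
    by_contra h
    simpa [hx] using hA x h
  exact ContinuousLinearMap.isUnit_iff_bijective.2
    ⟨hinj, (LinearMap.injective_iff_surjective (f := (A : V →ₗ[ℝ] V))).1 hinj⟩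

theorem IsSelfAdjoint.inner_apply_comm {A : V →L[ℝ] V} (hA : IsSelfAdjoint A) (x y : V) :
    ⟪A x, y⟫ = ⟪x, A y⟫ :=
  hA.isSymmetric x y

/-- The power of the gap stress is the dissipation density minus `T` times the derivative of
`⟪Dα a, β⟫`. -/
theorem inner_Sgap_eq {Cε Cα Cm Dε Dα Dm : V →L[ℝ] V}
    (hCα : IsSelfAdjoint Cα) (hDα : IsSelfAdjoint Dα) (hCαu : IsUnit Cα)
    {T : ℝ} (hT : T ≠ 0) {η β β' a a' : ℝ → V} {t : ℝ}
    (hβODE : Dα (β' t) - Cα (β t) + T⁻¹ • Chat Cα Cm Dα Dm (η t) = 0)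
    (haODE : Dα (a' t) + Cα (a t) = Dα (β t + T • β' t)) :
    ⟪Sgap Cε Cα Cm Dε Dα Dm T η β a t, η t⟫ =
      (⟪η t, (CSchur Cε Cα Cm + T⁻¹ • DInst Dε Dα Dm) (η t)⟫ +
          T * ⟪β t, Dα (β t)⟫ +
          T ^ 2 * ⟪β' t, (Dα ∘L Ring.inverse Cα ∘L Dα) (β' t)⟫) -
        T * (⟪Dα (a t), β' t⟫ + ⟪Dα (a' t), β t⟫) := by
  have hg : Chat Cα Cm Dα Dm (η t) = T • (Cα (β t) - Dα (β' t)) := by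
    have h : T⁻¹ • Chat Cα Cm Dα Dm (η t) = Cα (β t) - Dα (β' t) := by
      rw [← sub_eq_zero, ← hβODE]; abel
    rw [← h, smul_inv_smul₀ hT]
  obtain ⟨w, hw⟩ : ∃ w, w = Ring.inverse Cα (Dα (β' t)) := ⟨_, rfl⟩
  have hCw : Cα w = Dα (β' t) := by rw [hw, apply_inverse_apply hCαu]
  have hCg : Ring.inverse Cα (Chat Cα Cm Dα Dm (η t)) = T • (β t - w) := by
    rw [hg, map_smul, map_sub, inverse_apply_apply hCαu, hw]
  have ha : Cα (a t) = Dα (β t) + T • Dα (β' t) - Dα (a' t) := by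
    rw [eq_sub_iff_add_eq', haODE, map_add, map_smul]
  have hS : ⟪Sgap Cε Cα Cm Dε Dα Dm T η β a t, η t⟫ =
      ⟪η t, (CSchur Cε Cα Cm + T⁻¹ • DInst Dε Dα Dm) (η t)⟫ +
        ⟪T • (β t - w) + (a t - T • β t), Chat Cα Cm Dα Dm (η t)⟫ := by
    rw [← hCg, real_inner_comm _ (η t),
      ← ContinuousLinearMap.adjoint_inner_left (Chat Cα Cm Dα Dm) (η t),
      ← inner_add_left, map_add, Sgap, CInst]
    congr 1
    simp only [add_apply, ContinuousLinearMap.comp_apply]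
    abel
  have haC : ⟪a t, Cα (β t)⟫ = ⟪Dα (β t), β t⟫ + T * ⟪Dα (β' t), β t⟫ - ⟪Dα (a' t), β t⟫ := by
    rw [← hCα.inner_apply_comm, ha, inner_sub_left, inner_add_left, real_inner_smul_left]
  have hwC : ⟪w, Cα (β t)⟫ = ⟪Dα (β' t), β t⟫ := by rw [← hCα.inner_apply_comm, hCw]
  rw [hS, hg]
  simp only [ContinuousLinearMap.comp_apply, ← hw, inner_add_left, inner_sub_left,
    inner_sub_right, real_inner_smul_left, real_inner_smul_right, haC, hwC,
    hDα.inner_apply_comm (a t)]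
  rw [← hDα.inner_apply_comm (β' t) w, real_inner_comm (Dα (β' t)) w,
    real_inner_comm (Dα (β t)) (β t), real_inner_comm (Dα (β' t)) (β t)]
  ring

end Helpers

theorem stmt12 {V : Type*} [NormedAddCommGroup V] [InnerProductSpace ℝ V]
    [FiniteDimensional ℝ V]
    (Cε Cα Cm Dε Dα Dm : V →L[ℝ] V)
    (hCε : IsSelfAdjoint Cε) (hCα : IsSelfAdjoint Cα) (hCm : IsSelfAdjoint Cm)
    (hDε : IsSelfAdjoint Dε) (hDα : IsSelfAdjoint Dα) (hDm : IsSelfAdjoint Dm)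
    (hCαpos : ∀ x : V, x ≠ 0 → 0 < ⟪Cα x, x⟫)
    (hDαpos : ∀ x : V, x ≠ 0 → 0 < ⟪Dα x, x⟫)
    (T : ℝ) (hT : 0 < T)
    (η β β' a a' : ℝ → V)
    (hη : ContinuousOn η (Set.Icc 0 T))
    (hβ : ∀ t ∈ Set.Icc (0:ℝ) T, HasDerivWithinAt β (β' t) (Set.Icc 0 T) t)
    (hβ' : ContinuousOn β' (Set.Icc 0 T))
    (hβODE : ∀ t ∈ Set.Icc (0:ℝ) T,
      Dα (β' t) - Cα (β t) + T⁻¹ • Chat Cα Cm Dα Dm (η t) = 0)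
    (hβT : β T = 0)
    (ha : ∀ t ∈ Set.Icc (0:ℝ) T, HasDerivWithinAt a (a' t) (Set.Icc 0 T) t)
    (ha' : ContinuousOn a' (Set.Icc 0 T))
    (haODE : ∀ t ∈ Set.Icc (0:ℝ) T,
      Dα (a' t) + Cα (a t) = Dα (β t + T • β' t))
    (ha0 : a 0 = 0) :
    (∫ t in (0:ℝ)..T, ⟪Sgap Cε Cα Cm Dε Dα Dm T η β a t, η t⟫) =
      (∫ t in (0:ℝ)..T,
        (⟪η t, (CSchur Cε Cα Cm + T⁻¹ • DInst Dε Dα Dm) (η t)⟫ +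
          T * ⟪β t, Dα (β t)⟫ +
          T ^ 2 * ⟪β' t, (Dα ∘L Ring.inverse Cα ∘L Dα) (β' t)⟫)) ∧
      ((∀ x : V, 0 ≤ ⟪CSchur Cε Cα Cm x, x⟫) →
        (∀ x : V, 0 ≤ ⟪DInst Dε Dα Dm x, x⟫) →
        0 ≤ ∫ t in (0:ℝ)..T, ⟪Sgap Cε Cα Cm Dε Dα Dm T η β a t, η t⟫) := by
  have hCαu := isUnit_of_inner_pos hCαpos
  have hβc : ContinuousOn β (Set.Icc 0 T) := fun t ht => (hβ t ht).continuousWithinAt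
  have hac : ContinuousOn a (Set.Icc 0 T) := fun t ht => (ha t ht).continuousWithinAt
  have hIcc : Set.uIcc 0 T = Set.Icc 0 T := Set.uIcc_of_le hT.le
  have hder : IntervalIntegrable (fun t => ⟪Dα (a t), β' t⟫ + ⟪Dα (a' t), β t⟫)
      MeasureTheory.volume 0 T := by
    apply ContinuousOn.intervalIntegrable
    rw [hIcc]
    fun_prop
  have hdis : IntervalIntegrable (fun t =>
      ⟪η t, (CSchur Cε Cα Cm + T⁻¹ • DInst Dε Dα Dm) (η t)⟫ +
        T * ⟪β t, Dα (β t)⟫ +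
        T ^ 2 * ⟪β' t, (Dα ∘L Ring.inverse Cα ∘L Dα) (β' t)⟫)
      MeasureTheory.volume 0 T := by
    apply ContinuousOn.intervalIntegrable
    rw [hIcc]
    fun_prop
  have hzero : ∫ t in (0:ℝ)..T, (⟪Dα (a t), β' t⟫ + ⟪Dα (a' t), β t⟫) = 0 := by
    rw [intervalIntegral.integral_eq_sub_of_hasDerivAt_of_le hT.le
      (f := fun t => ⟪Dα (a t), β t⟫) (by fun_prop) _ hder]
    · simp [hβT, ha0]
    · intro t ht
      have hmem := Set.Ioo_subset_Icc_self ht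
      have hnhds := Icc_mem_nhds ht.1 ht.2
      exact (Dα.hasFDerivAt.comp_hasDerivAt t ((ha t hmem).hasDerivAt hnhds)).inner ℝ
        ((hβ t hmem).hasDerivAt hnhds)
  have key : (∫ t in (0:ℝ)..T, ⟪Sgap Cε Cα Cm Dε Dα Dm T η β a t, η t⟫) =
      ∫ t in (0:ℝ)..T,
        (⟪η t, (CSchur Cε Cα Cm + T⁻¹ • DInst Dε Dα Dm) (η t)⟫ +
          T * ⟪β t, Dα (β t)⟫ +
          T ^ 2 * ⟪β' t, (Dα ∘L Ring.inverse Cα ∘L Dα) (β' t)⟫) := by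
    rw [intervalIntegral.integral_congr fun t ht =>
        inner_Sgap_eq hCα hDα hCαu hT.ne' (hβODE t (hIcc ▸ ht)) (haODE t (hIcc ▸ ht)),
      intervalIntegral.integral_sub hdis (hder.const_mul T),
      intervalIntegral.integral_const_mul, hzero, mul_zero, sub_zero]
  refine ⟨key, fun hCS hDI => key ▸ intervalIntegral.integral_nonneg hT.le fun t _ => ?_⟩
  have hη_nonneg : 0 ≤ ⟪η t, (CSchur Cε Cα Cm + T⁻¹ • DInst Dε Dα Dm) (η t)⟫ := by
    rw [real_inner_comm, add_apply, smul_apply,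
      inner_add_left, real_inner_smul_left]
    exact add_nonneg (hCS _) (mul_nonneg (inv_nonneg.2 hT.le) (hDI _))
  have hβ_nonneg : 0 ≤ ⟪β t, Dα (β t)⟫ := by
    rw [real_inner_comm]
    exact inner_apply_nonneg_of_inner_pos hDαpos _
  have hβ'_nonneg : 0 ≤ ⟪β' t, (Dα ∘L Ring.inverse Cα ∘L Dα) (β' t)⟫ := by
    have h := inner_apply_nonneg_of_inner_pos hCαpos (Ring.inverse Cα (Dα (β' t)))
    rwa [apply_inverse_apply hCαu, hDα.inner_apply_comm] at h
  positivity
end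

section
/- For every κ ∈ I, one has M″(κ)·E′(κ) − M′(κ)·E″(κ) = M′(κ)² ≥ 0, i.e., the numerator of the signed curvature of the L-curve κ ↦ (E(κ), M(κ)) is nonnegative (the L-curve is a convex arc). Moreover E′(κ) = −κ·M′(κ); hence, for κ ∈ I with κ > 0, if M′(κ) ≤ 0 then E′(κ) ≥ 0, so E is nondecreasing wherever M is nonincreasing. -/
theorem stmt17 (a b : ℝ) (E M E' M' E'' M'' : ℝ → ℝ)
    (hE : ∀ κ ∈ Set.Ioo a b, HasDerivAt E (E' κ) κ)
    (hE' : ∀ κ ∈ Set.Ioo a b, HasDerivAt E' (E'' κ) κ)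
    (hM : ∀ κ ∈ Set.Ioo a b, HasDerivAt M (M' κ) κ)
    (hM' : ∀ κ ∈ Set.Ioo a b, HasDerivAt M' (M'' κ) κ)
    (hstat : ∀ κ ∈ Set.Ioo a b, E' κ + κ * M' κ = 0) :
    ∀ κ ∈ Set.Ioo a b,
      (M'' κ * E' κ - M' κ * E'' κ = M' κ ^ 2 ∧ 0 ≤ M' κ ^ 2) ∧
        E' κ = -κ * M' κ ∧
          (0 < κ → M' κ ≤ 0 → 0 ≤ E' κ) := by
  intro κ hκ
  have hderiv : E'' κ + (1 * M' κ + κ * M'' κ) = 0 := by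
    have hsum := (hE' κ hκ).add ((hasDerivAt_id κ).mul (hM' κ hκ))
    refine hsum.unique ((hasDerivAt_const κ (0 : ℝ)).congr_of_eventuallyEq ?_)
    filter_upwards [isOpen_Ioo.mem_nhds hκ] with x hx using hstat x hx
  have hE_eq : E' κ = -κ * M' κ := by linarith [hstat κ hκ]
  refine ⟨⟨?_, sq_nonneg _⟩, hE_eq, fun hpos hM_nonpos => ?_⟩
  · rw [hE_eq]
    linear_combination -M' κ * hderiv
  · rw [hE_eq]
    exact mul_nonneg_of_nonpos_of_nonpos (by linarith) hM_nonpos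
end
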